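/- Let f : ℝ → ℂ be 2π-periodic of class C³ and let ρ be a filter function of class C^r with r > 2. Define q(x) = d/dx (x ρ(x)), and for a discrete function w define the discrete function w^q by (w^q)̂_k = q(kh) ŵ_k. Then there exists a constant c > 0, depending only on f and ρ and not on N or w, such that for every even integer N ≥ 2 and every discrete function w, the remainder r(w)_i := (D_h(f(α_·) w))_i − f(α_i)(D_h w)_i − (w^q)_i f′(α_i) satisfies ‖D_h^k(r(w))‖_{l²} ≤ c ‖w‖_{l²} and ‖r(S_h^k w)‖_{l²} ≤ c ‖w‖_{l²} for every k ∈ {0, 1}. -/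

import Mathlib

open scoped BigOperators
open Finset

noncomputable section

/-- Grid spacing `h = 2π/N`. -/
def hgrid (N : ℤ) : ℝ := 2 * Real.pi / N

/-- Grid points `α_j = j h`. -/
def gridPt (N : ℤ) (j : ℤ) : ℝ := j * hgrid N

/-- Index set `{-N/2+1, …, N/2}`. -/
def idxs (N : ℤ) : Finset ℤ := Finset.Icc (-(N / 2) + 1) (N / 2)

/-- Discrete Fourier coefficient `f̂_k`. -/
def dft (N : ℤ) (f : ℤ → ℂ) (k : ℤ) : ℂ :=
  (N : ℂ)⁻¹ * ∑ j ∈ idxs N, f j * Complex.exp (-(Complex.I * (k : ℂ) * (gridPt N j : ℂ)))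

/-- Reconstruction of a discrete function from Fourier coefficients. -/
def idft (N : ℤ) (c : ℤ → ℂ) (j : ℤ) : ℂ :=
  ∑ k ∈ idxs N, c k * Complex.exp (Complex.I * (k : ℂ) * (gridPt N j : ℂ))

/-- The pseudo-spectral derivative `S_h`. -/
def Sh (N : ℤ) (f : ℤ → ℂ) : ℤ → ℂ :=
  idft N fun k => if k = N / 2 then 0 else Complex.I * (k : ℂ) * dft N f k

/-- The pseudo-spectral antiderivative `S_h⁻¹`. -/
def Shinv (N : ℤ) (f : ℤ → ℂ) : ℤ → ℂ :=
  idft N fun k => if k = 0 then 0 else dft N f k / (Complex.I * (k : ℂ))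

/-- The filtered discrete function `f^p`. -/
def filterP (N : ℤ) (ρ : ℝ → ℝ) (f : ℤ → ℂ) : ℤ → ℂ :=
  idft N fun k => (ρ (gridPt N k) : ℂ) * dft N f k

/-- The filtered derivative `D_h`. -/
def Dh (N : ℤ) (ρ : ℝ → ℝ) (f : ℤ → ℂ) : ℤ → ℂ :=
  idft N fun k => Complex.I * (k : ℂ) * (ρ (gridPt N k) : ℂ) * dft N f k

/-- Discrete `l²` norm. -/
def l2norm (N : ℤ) (f : ℤ → ℂ) : ℝ :=
  Real.sqrt (hgrid N * ∑ j ∈ idxs N, ‖f j‖ ^ 2)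

/-- Discrete Hilbert transform `H_h`. -/
def Hh (N : ℤ) (f : ℤ → ℂ) (i : ℤ) : ℂ :=
  ((hgrid N / Real.pi : ℝ) : ℂ) *
    ∑ j ∈ (idxs N).filter (fun j => Odd (j - i)),
      f j * (Real.cot ((gridPt N i - gridPt N j) / 2) : ℂ)

/-- Discrete inner product `(f,g)_h`. -/
def dip (N : ℤ) (f g : ℤ → ℂ) : ℂ :=
  (hgrid N : ℂ) * ∑ j ∈ idxs N, (starRingEnd ℂ) (f j) * g j

/-- Discrete mean `⟨f⟩_h`. -/
def dmean (N : ℤ) (f : ℤ → ℂ) : ℂ :=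
  (N : ℂ)⁻¹ * ∑ j ∈ idxs N, f j

/-- The discrete function of samples of a periodic function. -/
def samples (N : ℤ) (f : ℝ → ℂ) : ℤ → ℂ := fun j => f (gridPt N j)

/-- Fourier coefficient of a `2π`-periodic function. -/
def fourierCoeffP (f : ℝ → ℂ) (k : ℤ) : ℂ :=
  ((2 * Real.pi)⁻¹ : ℝ) * ∫ α in (-Real.pi)..Real.pi, f α * Complex.exp (-(Complex.I * (k : ℂ) * (α : ℂ)))

/-- Sobolev norm `‖f‖_s`. -/
def sobolevNorm (s : ℕ) (f : ℝ → ℂ) : ℝ :=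
  Real.sqrt (∑' k : ℤ, (1 + (k : ℝ) ^ 2) ^ s * ‖fourierCoeffP f k‖ ^ 2)

/-- A filter (cutoff) function for numerical filtering. -/
structure IsFilter (ρ : ℝ → ℝ) : Prop where
  even : ∀ x, ρ (-x) = ρ x
  nonneg : ∀ x, 0 ≤ ρ x
  smooth : ∃ r : ℕ, 2 < r ∧ ContDiff ℝ r ρ
  zero_at_pi : ρ Real.pi = 0
  zero_at_neg_pi : ρ (-Real.pi) = 0
  deriv_zero_at_pi : deriv ρ Real.pi = 0
  deriv_zero_at_neg_pi : deriv ρ (-Real.pi) = 0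
  one_near_zero : ∃ μ : ℝ, 0 < μ ∧ μ < 1 ∧ ∀ x : ℝ, |x| ≤ μ * Real.pi → ρ x = 1

/-- `q(x) = d/dx (x ρ(x))`. -/
def qfilt (ρ : ℝ → ℝ) (x : ℝ) : ℝ := deriv (fun y => y * ρ y) x

/-- The discrete function `w^q` with Fourier coefficients `q(kh) ŵ_k`. -/
def wq (N : ℤ) (ρ : ℝ → ℝ) (w : ℤ → ℂ) : ℤ → ℂ :=
  idft N fun k => (qfilt ρ (gridPt N k) : ℂ) * dft N w k

/-- Remainder in the discrete product rule for `D_h`. -/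
def DhProdRem (N : ℤ) (ρ : ℝ → ℝ) (f : ℝ → ℂ) (w : ℤ → ℂ) (i : ℤ) : ℂ :=
  Dh N ρ (fun j => f (gridPt N j) * w j) i - f (gridPt N i) * Dh N ρ w i -
    wq N ρ w i * deriv f (gridPt N i)

theorem Function.Periodic.hasSum_fourierCoeffOn_mul_exp {g : ℝ → ℂ}
    (hper : Function.Periodic g (2 * Real.pi)) (hg : Continuous g)
    (hs : Summable fun n => ‖fourierCoeffOn Real.two_pi_pos g n‖) (x : ℝ) :
    HasSum (fun n : ℤ => fourierCoeffOn Real.two_pi_pos g n *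
      Complex.exp (Complex.I * (n : ℂ) * (x : ℂ))) (g x) := by
  have hT : Fact (0 < 2 * Real.pi - 0) := ⟨by simpa using Real.two_pi_pos⟩
  have hcont : Continuous (AddCircle.liftIoc (2 * Real.pi - 0) 0 g) :=
    AddCircle.liftIoc_continuous (by simpa using (hper 0).symm) hg.continuousOn
  have hval : AddCircle.liftIoc (2 * Real.pi - 0) 0 g (x : AddCircle (2 * Real.pi - 0)) = g x := by
    obtain ⟨hy, z, hz⟩ := (toIocMod_eq_iff hT.out (a := 0) (b := x)).1 rfl
    have hcoe : (x : AddCircle (2 * Real.pi - 0)) =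
        ((toIocMod hT.out 0 x : ℝ) : AddCircle (2 * Real.pi - 0)) := by
      conv_lhs => rw [hz]
      rw [AddCircle.coe_add, add_eq_left, AddCircle.coe_eq_zero_iff]
      exact ⟨z, rfl⟩
    rw [hcoe, AddCircle.liftIoc_coe_apply hy]
    conv_rhs => rw [hz]
    simpa only [sub_zero] using ((hper.zsmul z) (toIocMod hT.out 0 x)).symm
  have h := has_pointwise_sum_fourier_series_of_summable
    (f := ⟨AddCircle.liftIoc (2 * Real.pi - 0) 0 g, hcont⟩) hs.of_norm x
  simp only [ContinuousMap.coe_mk, hval, fourier_coe_apply, smul_eq_mul] at h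
  convert h using 4 with n
  · rfl
  · have : (Real.pi : ℂ) ≠ 0 := by exact_mod_cast Real.pi_ne_zero
    rw [sub_zero]
    push_cast
    field_simp

theorem summable_sq_norm_fourierCoeffOn {g : ℝ → ℂ} (hg : Continuous g) :
    Summable fun n => ‖fourierCoeffOn Real.two_pi_pos g n‖ ^ 2 := by
  refine (hasSum_sq_fourierCoeffOn Real.two_pi_pos ?_).summable
  obtain ⟨C, hC⟩ := isCompact_Icc.exists_bound_of_continuousOn (s := Set.Icc 0 (2 * Real.pi))
    hg.continuousOn
  refine MeasureTheory.MemLp.of_bound hg.aestronglyMeasurable C ?_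
  exact MeasureTheory.ae_restrict_of_forall_mem measurableSet_Ioc
    fun x hx => hC x (Set.Ioc_subset_Icc_self hx)

theorem Function.Periodic.fourierCoeffOn_deriv {g : ℝ → ℂ}
    (hper : Function.Periodic g (2 * Real.pi)) (hg : ContDiff ℝ 1 g) (n : ℤ) :
    fourierCoeffOn Real.two_pi_pos (deriv g) n =
      Complex.I * n * fourierCoeffOn Real.two_pi_pos g n := by
  have hd : ∀ x, HasDerivAt g (deriv g x) x := fun x =>
    (hg.differentiable one_ne_zero x).hasDerivAt
  have hc : Continuous (deriv g) := hg.continuous_deriv le_rfl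
  have h0 : g (2 * Real.pi) = g 0 := by simpa using hper 0
  rcases eq_or_ne n 0 with rfl | hn
  · rw [fourierCoeffOn_eq_integral]
    simp [intervalIntegral.integral_eq_sub_of_hasDerivAt (fun x _ => hd x)
      (hc.intervalIntegrable _ _), h0]
  · rw [fourierCoeffOn_of_hasDerivAt Real.two_pi_pos hn (fun x _ => hd x)
      (hc.intervalIntegrable _ _), h0]
    have : (n : ℂ) ≠ 0 := by exact_mod_cast hn
    have : (Real.pi : ℂ) ≠ 0 := by exact_mod_cast Real.pi_ne_zero
    push_cast
    field_simp
    ring_nf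

theorem Function.Periodic.deriv {g : ℝ → ℂ} {T : ℝ} (hper : Function.Periodic g T) :
    Function.Periodic (deriv g) T := fun x => by
  rw [← deriv_comp_add_const]
  exact congrArg (fun u => _root_.deriv u x) (funext hper)

theorem Function.Periodic.summable_sq_mul_fourierCoeffOn {f : ℝ → ℂ}
    (hper : Function.Periodic f (2 * Real.pi)) (hf : ContDiff ℝ 3 f) :
    Summable fun n : ℤ => (n : ℝ) ^ 2 * ‖fourierCoeffOn Real.two_pi_pos f n‖ := by
  have hf1 : ContDiff ℝ 2 (_root_.deriv f) := (contDiff_succ_iff_deriv.1 hf).2.2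
  have hf2 : ContDiff ℝ 1 (_root_.deriv (_root_.deriv f)) := (contDiff_succ_iff_deriv.1 hf1).2.2
  have hsq := summable_sq_norm_fourierCoeffOn (hf2.continuous_deriv le_rfl)
  have hinv : Summable fun n : ℤ => 1 / (n : ℝ) ^ 2 :=
    Real.summable_one_div_int_pow.2 one_lt_two
  refine Summable.of_nonneg_of_le (fun n => by positivity) (fun n => ?_) (hsq.add hinv)
  rw [hper.deriv.deriv.fourierCoeffOn_deriv hf2,
    hper.deriv.fourierCoeffOn_deriv (hf1.of_le (by norm_num)),
    hper.fourierCoeffOn_deriv (hf.of_le (by norm_num))]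
  rcases eq_or_ne n 0 with rfl | hn
  · simp
  have hn' : 0 < |(n : ℝ)| := by positivity
  simp only [norm_mul, Complex.norm_I, Complex.norm_intCast, one_mul]
  set t := ‖fourierCoeffOn Real.two_pi_pos f n‖
  rw [← sq_abs (n : ℝ)]
  set a := |(n : ℝ)|
  have : a ^ 2 * t = (a * (a * (a * t))) * (1 / a) := by field_simp
  rw [this]
  have h2 : 1 / a ^ 2 = (1 / a) ^ 2 := by simp
  rw [h2]
  nlinarith [sq_nonneg (a * (a * (a * t)) - 1 / a), sq_nonneg (a * (a * (a * t))),
    sq_nonneg (1 / a)]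

theorem Function.Periodic.summable_abs_pow_mul_fourierCoeffOn {f : ℝ → ℂ}
    (hper : Function.Periodic f (2 * Real.pi)) (hf : ContDiff ℝ 3 f) {p : ℕ} (hp : p ≤ 2) :
    Summable fun n : ℤ => |(n : ℝ)| ^ p * ‖fourierCoeffOn Real.two_pi_pos f n‖ := by
  refine (hper.summable_sq_mul_fourierCoeffOn hf).of_norm_bounded_eventually ?_
  filter_upwards [(Set.finite_singleton (0 : ℤ)).compl_mem_cofinite] with n hn
  have h1 : (1 : ℝ) ≤ |(n : ℝ)| := by exact_mod_cast Int.one_le_abs hn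
  rw [norm_mul, norm_pow, Real.norm_eq_abs, abs_abs, norm_norm, ← sq_abs (n : ℝ)]
  gcongr

/-- First-order Taylor estimates on a compact interval, with a uniform constant. -/
theorem ContDiff.exists_taylor_bound {g : ℝ → ℝ} (hg : ContDiff ℝ 2 g) (a b : ℝ) :
    ∃ C : ℝ, 0 ≤ C ∧ ∀ x ∈ Set.Icc a b, ∀ y ∈ Set.Icc a b,
      |deriv g y - deriv g x| ≤ C * |y - x| ∧
      |g y - g x - (y - x) * deriv g x| ≤ C * (y - x) ^ 2 := by
  have hg1 : ContDiff ℝ 1 (deriv g) := (contDiff_succ_iff_deriv.1 hg).2.2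
  obtain ⟨C, hC⟩ := isCompact_Icc.exists_bound_of_continuousOn (s := Set.Icc a b)
    (hg1.continuous_deriv le_rfl).continuousOn
  have hlip : ∀ x ∈ Set.Icc a b, ∀ y ∈ Set.Icc a b,
      |deriv g y - deriv g x| ≤ |C| * |y - x| := fun x hx y hy =>
    (convex_Icc a b).norm_image_sub_le_of_norm_deriv_le
      (fun z _ => hg1.differentiable one_ne_zero z)
      (fun z hz => (hC z hz).trans (le_abs_self C)) hx hy
  refine ⟨|C|, abs_nonneg C, fun x hx y hy => ⟨hlip x hx y hy, ?_⟩⟩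
  have hd : ∀ z, HasDerivAt (fun z => g z - (z - x) * deriv g x) (deriv g z - 1 * deriv g x) z :=
    fun z => (hg.differentiable two_ne_zero z).hasDerivAt.sub
      (((hasDerivAt_id z).sub_const x).mul_const _)
  have h := (convex_uIcc x y).norm_image_sub_le_of_norm_hasDerivWithin_le
    (C := |C| * |y - x|) (fun z _ => (hd z).hasDerivWithinAt) (fun z hz => ?_)
    Set.left_mem_uIcc Set.right_mem_uIcc
  · simp only [sub_self, zero_mul, sub_zero, Real.norm_eq_abs] at h
    rw [mul_assoc, abs_mul_abs_self, ← sq] at h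
    convert h using 2
    ring
  · rw [one_mul]
    exact (hlip x hx z (Set.uIcc_subset_Icc hx hy hz)).trans
      (mul_le_mul_of_nonneg_left (Set.abs_sub_left_of_mem_uIcc hz) (abs_nonneg C))

/-- `2π`-periodic extension of the restriction of `g` to `(-π, π]`. -/
def periodize (g : ℝ → ℝ) (x : ℝ) : ℝ := g (toIocMod Real.two_pi_pos (-Real.pi) x)

theorem periodize_periodic (g : ℝ → ℝ) : Function.Periodic (periodize g) (2 * Real.pi) :=
  fun x => congrArg g (toIocMod_periodic Real.two_pi_pos (-Real.pi) x)

theorem periodize_eq_self (g : ℝ → ℝ) {x : ℝ} (hx : x ∈ Set.Ioc (-Real.pi) Real.pi) :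
    periodize g x = g x := by
  unfold periodize
  rw [(toIocMod_eq_self Real.two_pi_pos).2 ⟨hx.1, by linarith [hx.2]⟩]

/-- If `g` and its derivative vanish at `±π`, the periodic extension of `g` satisfies a global
second-order Taylor estimate, although it need not be twice differentiable at odd multiples
of `π`. -/
theorem exists_periodize_taylor_bound {g : ℝ → ℝ} (hg : ContDiff ℝ 2 g)
    (h0 : g Real.pi = 0) (h0' : g (-Real.pi) = 0)
    (h1 : deriv g Real.pi = 0) (h1' : deriv g (-Real.pi) = 0) :
    ∃ C : ℝ, 0 ≤ C ∧ ∀ x ∈ Set.Ioc (-Real.pi) Real.pi, ∀ y : ℝ,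
      |periodize g (x + y) - periodize g x - y * deriv g x| ≤ C * y ^ 2 := by
  have hpi := Real.pi_pos
  obtain ⟨C, hC0, hC⟩ := hg.exists_taylor_bound (-Real.pi) Real.pi
  have hl : -Real.pi ∈ Set.Icc (-Real.pi) Real.pi := ⟨le_rfl, by linarith⟩
  have hr : Real.pi ∈ Set.Icc (-Real.pi) Real.pi := ⟨by linarith, le_rfl⟩
  -- Bounds in terms of the distance to either end point.
  have hgr : ∀ z ∈ Set.Icc (-Real.pi) Real.pi, |g z| ≤ C * (Real.pi - z) ^ 2 := fun z hz => by
    have := (hC _ hr z hz).2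
    rw [h0, h1] at this
    convert this using 2 <;> ring
  have hgl : ∀ z ∈ Set.Icc (-Real.pi) Real.pi, |g z| ≤ C * (z + Real.pi) ^ 2 := fun z hz => by
    have := (hC _ hl z hz).2
    rw [h0', h1'] at this
    convert this using 2 <;> ring
  have hdr : ∀ z ∈ Set.Icc (-Real.pi) Real.pi, |deriv g z| ≤ C * (Real.pi - z) := fun z hz => by
    have := (hC _ hr z hz).1
    rwa [h1, sub_zero, abs_sub_comm z, abs_of_nonneg (sub_nonneg.2 hz.2)] at this
  have hdl : ∀ z ∈ Set.Icc (-Real.pi) Real.pi, |deriv g z| ≤ C * (z + Real.pi) := fun z hz => by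
    have := (hC _ hl z hz).1
    rwa [h1', sub_zero, sub_neg_eq_add, abs_of_nonneg (neg_le_iff_add_nonneg.1 hz.1)] at this
  have key : ∀ u v d y A B D : ℝ, |u| ≤ A → |v| ≤ B → |d| ≤ D →
      |u - v - y * d| ≤ A + B + |y| * D := fun u v d y A B D hu hv hd => by
    have h := mul_le_mul_of_nonneg_left hd (abs_nonneg y)
    rw [← abs_mul] at h
    calc |u - v - y * d| ≤ |u - v| + |y * d| := abs_sub _ _
      _ ≤ (|u| + |v|) + |y * d| := by gcongr; exact abs_sub _ _
      _ ≤ _ := by linarith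
  refine ⟨10 * C, by positivity, fun x hx y => ?_⟩
  have hx' : x ∈ Set.Icc (-Real.pi) Real.pi := ⟨hx.1.le, hx.2⟩
  rw [periodize_eq_self g hx]
  by_cases hin : x + y ∈ Set.Ioc (-Real.pi) Real.pi
  · rw [periodize_eq_self g hin]
    have := (hC x hx' (x + y) ⟨hin.1.le, hin.2⟩).2
    rw [add_sub_cancel_left] at this
    exact this.trans (by nlinarith [mul_nonneg hC0 (sq_nonneg y)])
  have hz := toIocMod_mem_Ioc Real.two_pi_pos (-Real.pi) (x + y)
  set z := toIocMod Real.two_pi_pos (-Real.pi) (x + y)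
  have hz' : z ∈ Set.Icc (-Real.pi) Real.pi := ⟨hz.1.le, by linarith [hz.2]⟩
  change |g z - g x - y * deriv g x| ≤ _
  rcases le_total Real.pi |y| with hy | hy
  · -- Large increments: crude bounds.
    have hy2 : Real.pi ^ 2 ≤ y ^ 2 := by rw [← sq_abs y]; gcongr
    have crude : ∀ t ∈ Set.Icc (-Real.pi) Real.pi,
        |g t| ≤ C * y ^ 2 ∧ |deriv g t| ≤ C * |y| := fun t ht => by
      rcases le_total t 0 with h | h
      · refine ⟨(hgl t ht).trans ?_, (hdl t ht).trans ?_⟩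
        · gcongr 1
          nlinarith [ht.1]
        · gcongr 1
          linarith
      · refine ⟨(hgr t ht).trans ?_, (hdr t ht).trans ?_⟩
        · gcongr 1
          nlinarith [ht.2]
        · gcongr 1
          linarith
    refine (key _ _ _ _ _ _ _ (crude z hz').1 (crude x hx').1 (crude x hx').2).trans ?_
    nlinarith [mul_nonneg hC0 (sq_nonneg y), abs_mul_abs_self y]
  · obtain ⟨hyl, hyr⟩ := abs_le.1 hy
    rw [Set.mem_Ioc, not_and_or, not_lt, not_le] at hin
    rcases hin with hin | hin
    · have hzv : z = x + y + 2 * Real.pi :=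
        (toIocMod_eq_iff Real.two_pi_pos).2
          ⟨⟨by linarith [hx.1], by linarith⟩, -1, by simp⟩
      refine (key _ _ _ _ (C * y ^ 2) (C * y ^ 2) (C * |y|) ((hgr z hz').trans ?_)
        ((hgl x hx').trans ?_) ((hdl x hx').trans ?_)).trans ?_
      · gcongr 1
        nlinarith [hx.1]
      · gcongr 1
        nlinarith [hx.1]
      · gcongr 1
        rw [abs_of_nonpos (by linarith [hx.1])]
        linarith
      · nlinarith [mul_nonneg hC0 (sq_nonneg y), abs_mul_abs_self y]
    · have hzv : z = x + y - 2 * Real.pi :=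
        (toIocMod_eq_iff Real.two_pi_pos).2
          ⟨⟨by linarith, by linarith [hx.2]⟩, 1, by simp⟩
      refine (key _ _ _ _ (C * y ^ 2) (C * y ^ 2) (C * |y|) ((hgl z hz').trans ?_)
        ((hgr x hx').trans ?_) ((hdr x hx').trans ?_)).trans ?_
      · gcongr 1
        nlinarith [hx.2]
      · gcongr 1
        nlinarith [hx.2]
      · gcongr 1
        rw [abs_of_nonneg (by linarith [hx.2])]
        linarith
      · nlinarith [mul_nonneg hC0 (sq_nonneg y), abs_mul_abs_self y]
theorem idxs_two_mul (M : ℤ) : idxs (2 * M) = Finset.Icc (-M + 1) M := by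
  simp [idxs]

theorem hgrid_pos {N : ℤ} (hN : 0 < N) : 0 < hgrid N := by
  have : (0 : ℝ) < N := by exact_mod_cast hN
  have := Real.pi_pos
  unfold hgrid
  positivity

theorem intCast_mul_hgrid {N : ℤ} (hN : 0 < N) : (N : ℝ) * hgrid N = 2 * Real.pi := by
  have : (N : ℝ) ≠ 0 := by exact_mod_cast hN.ne'
  unfold hgrid
  field_simp

theorem gridPt_mem_Ioc {N k : ℤ} (hN : 0 < N) (hev : Even N) (hk : k ∈ idxs N) :
    gridPt N k ∈ Set.Ioc (-Real.pi) Real.pi := by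
  obtain ⟨M, rfl⟩ := hev.two_dvd
  rw [idxs_two_mul, Finset.mem_Icc] at hk
  have hh := hgrid_pos hN
  have hM := intCast_mul_hgrid hN
  push_cast at hM
  have h1 : -(M : ℝ) + 1 ≤ k := by exact_mod_cast hk.1
  have h2 : (k : ℝ) ≤ M := by exact_mod_cast hk.2
  unfold gridPt
  constructor <;> nlinarith

theorem sum_Icc_add_one_of_eq {E : Type*} [AddCommGroup E] {F : ℤ → E} {a b : ℤ} (hab : a ≤ b)
    (hF : F (b + 1) = F a) : ∑ k ∈ Finset.Icc a b, F (k + 1) = ∑ k ∈ Finset.Icc a b, F k := by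
  have h1 : ∑ k ∈ Finset.Icc a b, F (k + 1) = ∑ k ∈ Finset.Icc (a + 1) (b + 1), F k := by
    rw [← Finset.map_add_right_Icc a b 1, Finset.sum_map]
    rfl
  have hl : Finset.Icc a b = insert a (Finset.Icc (a + 1) b) := by
    ext k; simp only [Finset.mem_insert, Finset.mem_Icc]; omega
  have hr : Finset.Icc (a + 1) (b + 1) = insert (b + 1) (Finset.Icc (a + 1) b) := by
    ext k; simp only [Finset.mem_insert, Finset.mem_Icc]; omega
  rw [h1, hl, hr, Finset.sum_insert (by simp), Finset.sum_insert (by simp), hF]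

theorem sum_idxs_add {E : Type*} [AddCommGroup E] {N : ℤ} (hN : 0 < N) (hev : Even N)
    {F : ℤ → E} (hF : ∀ k, F (k + N) = F k) (m : ℤ) :
    ∑ k ∈ idxs N, F (k + m) = ∑ k ∈ idxs N, F k := by
  obtain ⟨M, rfl⟩ := hev.two_dvd
  rw [idxs_two_mul]
  have step : ∀ m, ∑ k ∈ Finset.Icc (-M + 1) M, F (k + (m + 1)) =
      ∑ k ∈ Finset.Icc (-M + 1) M, F (k + m) := fun m => by
    rw [← sum_Icc_add_one_of_eq (F := fun k => F (k + m)) (by omega)]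
    · simp only [add_assoc, add_comm 1 m]
    · rw [← hF (-M + 1 + m)]
      congr 1
      ring
  induction m using Int.induction_on with
  | zero => simp
  | succ n ih => rw [step, ih]
  | pred n ih => rw [← step, sub_add_cancel, ih]

/-- The discrete Fourier mode of index `k` at the grid point of index `j`. -/
def mode (N k j : ℤ) : ℂ := Complex.exp (Complex.I * (k : ℂ) * (gridPt N j : ℂ))

theorem mode_add_left (N k l j : ℤ) : mode N (k + l) j = mode N k j * mode N l j := by
  unfold mode
  rw [← Complex.exp_add]
  push_cast
  ring_nf

theorem mode_comm (N k j : ℤ) : mode N k j = mode N j k := by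
  unfold mode gridPt
  push_cast
  ring_nf

theorem mode_add_right (N k i j : ℤ) : mode N k (i + j) = mode N k i * mode N k j := by
  simp only [mode_comm N k, mode_add_left]

theorem mode_period {N : ℤ} (hN : 0 < N) (j : ℤ) : mode N N j = 1 := by
  unfold mode
  rw [Complex.exp_eq_one_iff]
  refine ⟨j, ?_⟩
  have h : (N : ℂ) * (hgrid N : ℂ) = 2 * Real.pi := by exact_mod_cast intCast_mul_hgrid hN
  unfold gridPt
  push_cast
  linear_combination Complex.I * j * h

theorem norm_mode (N k j : ℤ) : ‖mode N k j‖ = 1 := by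
  unfold mode
  have : Complex.I * (k : ℂ) * (gridPt N j : ℂ) = ((k * gridPt N j : ℝ) : ℂ) * Complex.I := by
    push_cast; ring
  rw [this, Complex.norm_exp_ofReal_mul_I]

theorem conj_mode (N k j : ℤ) : (starRingEnd ℂ) (mode N k j) = mode N (-k) j := by
  unfold mode
  rw [← Complex.exp_conj]
  simp

theorem dft_eq_sum_mode (N : ℤ) (w : ℤ → ℂ) (k : ℤ) :
    dft N w k = (N : ℂ)⁻¹ * ∑ j ∈ idxs N, w j * mode N (-k) j := by
  unfold dft mode
  simp

theorem idft_eq_sum_mode (N : ℤ) (c : ℤ → ℂ) (j : ℤ) :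
    idft N c j = ∑ k ∈ idxs N, c k * mode N k j := rfl

theorem dft_add_period {N : ℤ} (hN : 0 < N) (w : ℤ → ℂ) (k : ℤ) :
    dft N w (k + N) = dft N w k := by
  simp only [dft_eq_sum_mode]
  congr 1
  refine Finset.sum_congr rfl fun j _ => ?_
  have h : mode N (-k) j = mode N (-(k + N)) j * mode N N j := by
    rw [← mode_add_left]; congr 1; ring
  rw [h, mode_period hN, mul_one]

theorem dft_mode_mul (N m : ℤ) (w : ℤ → ℂ) (k : ℤ) :
    dft N (fun j => mode N m j * w j) k = dft N w (k - m) := by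
  simp only [dft_eq_sum_mode]
  congr 1
  refine Finset.sum_congr rfl fun j _ => ?_
  rw [neg_sub, sub_eq_add_neg, mode_add_left]
  ring

theorem sum_mode_eq_zero {N m : ℤ} (hN : 0 < N) (hev : Even N) (hm : ¬ N ∣ m) :
    ∑ j ∈ idxs N, mode N m j = 0 := by
  have hshift := sum_idxs_add hN hev (F := mode N m)
    (fun j => by rw [mode_add_right, mode_comm N m N, mode_period hN, mul_one]) 1
  simp only [mode_add_right, ← Finset.sum_mul] at hshift
  by_contra hS
  apply hm
  have h1 : mode N m 1 = 1 := mul_left_cancel₀ hS (by rw [hshift, mul_one])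
  unfold mode at h1
  obtain ⟨n, hn⟩ := Complex.exp_eq_one_iff.1 h1
  have hNC : (N : ℂ) ≠ 0 := by exact_mod_cast hN.ne'
  have hpi : (Real.pi : ℂ) ≠ 0 := by exact_mod_cast Real.pi_ne_zero
  simp only [gridPt, hgrid] at hn
  push_cast at hn
  field_simp at hn
  refine ⟨n, ?_⟩
  exact_mod_cast hn

theorem sum_mode_sub {N k l : ℤ} (hN : 0 < N) (hev : Even N) (hk : k ∈ idxs N)
    (hl : l ∈ idxs N) :
    ∑ j ∈ idxs N, mode N (k - l) j = if k = l then (N : ℂ) else 0 := by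
  split_ifs with h
  · subst h
    obtain ⟨M, rfl⟩ := hev.two_dvd
    have : ((M + 1 - (-M + 1)).toNat : ℤ) = 2 * M := by omega
    simp only [mode, idxs_two_mul, sub_self, Int.cast_zero, mul_zero, zero_mul, Complex.exp_zero,
      Finset.sum_const, Int.card_Icc, nsmul_eq_mul, mul_one]
    exact_mod_cast this
  · refine sum_mode_eq_zero hN hev fun hd => h ?_
    obtain ⟨M, rfl⟩ := hev.two_dvd
    rw [idxs_two_mul, Finset.mem_Icc] at hk hl
    have := Int.eq_zero_of_abs_lt_dvd hd (by rw [abs_lt]; constructor <;> omega)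
    omega

theorem sum_norm_sq_sum_mode {N : ℤ} (hN : 0 < N) (hev : Even N) (c : ℤ → ℂ) :
    ∑ j ∈ idxs N, ‖∑ k ∈ idxs N, c k * mode N k j‖ ^ 2 = N * ∑ k ∈ idxs N, ‖c k‖ ^ 2 := by
  have key : ∑ j ∈ idxs N, ((∑ k ∈ idxs N, c k * mode N k j) *
      (starRingEnd ℂ) (∑ l ∈ idxs N, c l * mode N l j)) =
      N * ∑ k ∈ idxs N, c k * (starRingEnd ℂ) (c k) := by
    have h1 : ∀ j, (∑ k ∈ idxs N, c k * mode N k j) *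
        (starRingEnd ℂ) (∑ l ∈ idxs N, c l * mode N l j) =
        ∑ k ∈ idxs N, ∑ l ∈ idxs N, c k * (starRingEnd ℂ) (c l) * mode N (k - l) j := fun j => by
      rw [map_sum, Finset.sum_mul_sum]
      refine Finset.sum_congr rfl fun k _ => Finset.sum_congr rfl fun l _ => ?_
      rw [map_mul, conj_mode, sub_eq_add_neg, mode_add_left]
      ring
    simp only [h1]
    rw [Finset.sum_comm, Finset.mul_sum]
    refine Finset.sum_congr rfl fun k hk => ?_
    rw [Finset.sum_comm]
    simp only [← Finset.mul_sum]
    rw [Finset.sum_congr rfl fun l hl => by rw [sum_mode_sub hN hev hk hl]]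
    simp only [mul_ite, mul_zero, Finset.sum_ite_eq, hk, if_true]
    ring
  simp only [Complex.mul_conj'] at key
  exact_mod_cast key

theorem sum_norm_sq_idft {N : ℤ} (hN : 0 < N) (hev : Even N) (c : ℤ → ℂ) :
    ∑ j ∈ idxs N, ‖idft N c j‖ ^ 2 = N * ∑ k ∈ idxs N, ‖c k‖ ^ 2 :=
  sum_norm_sq_sum_mode hN hev c

theorem sum_norm_sq_dft {N : ℤ} (hN : 0 < N) (hev : Even N) (w : ℤ → ℂ) :
    N * ∑ k ∈ idxs N, ‖dft N w k‖ ^ 2 = ∑ j ∈ idxs N, ‖w j‖ ^ 2 := by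
  have hN' : (N : ℝ) ≠ 0 := by exact_mod_cast hN.ne'
  have h := sum_norm_sq_sum_mode hN hev fun j => (starRingEnd ℂ) (w j)
  have h2 : ∀ k, ‖dft N w k‖ ^ 2 =
      ((N : ℝ) ^ 2)⁻¹ * ‖∑ j ∈ idxs N, (starRingEnd ℂ) (w j) * mode N j k‖ ^ 2 := fun k => by
    rw [dft_eq_sum_mode, norm_mul, mul_pow, norm_inv, Complex.norm_intCast, inv_pow, sq_abs,
      ← Complex.norm_conj (∑ j ∈ idxs N, w j * mode N (-k) j), map_sum]
    simp only [map_mul, conj_mode, neg_neg, mode_comm N k]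
  simp only [h2]
  rw [← Finset.mul_sum, h]
  simp only [Complex.norm_conj]
  field_simp

/-- A Fourier multiplier is bounded on `l²` by the supremum of its symbol. -/
theorem l2norm_idft_mul_dft_le {N : ℤ} (hN : 0 < N) (hev : Even N) {a : ℤ → ℂ} {B : ℝ}
    (hB : 0 ≤ B) (ha : ∀ k ∈ idxs N, ‖a k‖ ≤ B) (w : ℤ → ℂ) :
    l2norm N (idft N fun k => a k * dft N w k) ≤ B * l2norm N w := by
  have hh := hgrid_pos hN
  have hN' : (0 : ℝ) < N := by exact_mod_cast hN
  unfold l2norm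
  rw [← Real.sqrt_sq hB, ← Real.sqrt_mul (sq_nonneg B)]
  apply Real.sqrt_le_sqrt
  rw [sum_norm_sq_idft hN hev, ← sum_norm_sq_dft hN hev w, mul_left_comm (B ^ 2),
    mul_left_comm (B ^ 2), Finset.mul_sum (a := B ^ 2)]
  gcongr with k hk
  rw [norm_mul, mul_pow]
  gcongr
  exact ha k hk

theorem l2norm_mode_mul (N m : ℤ) (w : ℤ → ℂ) :
    l2norm N (fun j => mode N m j * w j) = l2norm N w := by
  simp [l2norm, norm_mode]

theorem l2norm_const_mul (N : ℤ) (a : ℂ) (w : ℤ → ℂ) :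
    l2norm N (fun j => a * w j) = ‖a‖ * l2norm N w := by
  unfold l2norm
  simp only [norm_mul, mul_pow, ← Finset.mul_sum]
  rw [mul_left_comm, Real.sqrt_mul (sq_nonneg _), Real.sqrt_sq (norm_nonneg a)]

theorem l2norm_le_of_hasSum {ι : Type*} {N : ℤ} (hN : 0 < N) {u : ι → ℤ → ℂ} {v : ℤ → ℂ}
    {B : ι → ℝ} {b : ℝ} (hu : ∀ i, HasSum (fun m => u m i) (v i))
    (hB : ∀ m, l2norm N (u m) ≤ B m) (hb : HasSum B b) : l2norm N v ≤ b := by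
  have hh := hgrid_pos hN
  let emb : (ℤ → ℂ) → EuclideanSpace ℂ (idxs N) := fun w =>
    WithLp.toLp 2 fun j => (Real.sqrt (hgrid N) : ℂ) * w j
  have hemb : ∀ w, ‖emb w‖ = l2norm N w := fun w => by
    rw [EuclideanSpace.norm_eq, l2norm]
    congr 1
    rw [Finset.mul_sum, ← Finset.sum_coe_sort (idxs N)]
    refine Finset.sum_congr rfl fun j _ => ?_
    simp only [emb, norm_mul, mul_pow, Complex.norm_real, Real.norm_eq_abs, sq_abs,
      Real.sq_sqrt hh.le]
  have hsum : HasSum (fun m => emb (u m)) (emb v) := by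
    have : HasSum (fun m (j : idxs N) => (Real.sqrt (hgrid N) : ℂ) * u m j)
        (fun j : idxs N => (Real.sqrt (hgrid N) : ℂ) * v j) :=
      Pi.hasSum.2 fun j => (hu j).mul_left _
    exact ((EuclideanSpace.equiv (idxs N) ℂ).symm.hasSum).2 this
  rw [← hemb]
  exact hsum.norm_le_of_bounded hb fun m => (hemb (u m)).trans_le (hB m)

theorem hasSum_dft {ι : Type*} {N : ℤ} {u : ι → ℤ → ℂ} {v : ℤ → ℂ}
    (hu : ∀ i, HasSum (fun m => u m i) (v i)) (k : ℤ) :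
    HasSum (fun m => dft N (u m) k) (dft N v k) :=
  (hasSum_sum fun j _ => (hu j).mul_right _).mul_left _

theorem hasSum_idft {ι : Type*} {N : ℤ} {u : ι → ℤ → ℂ} {v : ℤ → ℂ}
    (hu : ∀ k, HasSum (fun m => u m k) (v k)) (i : ℤ) :
    HasSum (fun m => idft N (u m) i) (idft N v i) :=
  hasSum_sum fun k _ => (hu k).mul_right _

theorem dft_const_mul (N : ℤ) (a : ℂ) (w : ℤ → ℂ) (k : ℤ) :
    dft N (fun j => a * w j) k = a * dft N w k := by
  simp only [dft_eq_sum_mode, Finset.mul_sum]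
  refine Finset.sum_congr rfl fun j _ => ?_
  ring

/-- The symbol of `D_h`, extended periodically to all frequencies. -/
def DhSymbol (N : ℤ) (ρ : ℝ → ℝ) (k : ℤ) : ℂ :=
  Complex.I * ((periodize (fun x => x * ρ x) (gridPt N k) / hgrid N : ℝ) : ℂ)

theorem DhSymbol_eq {N k : ℤ} (hN : 0 < N) (hev : Even N) (ρ : ℝ → ℝ) (hk : k ∈ idxs N) :
    DhSymbol N ρ k = Complex.I * (k : ℂ) * (ρ (gridPt N k) : ℂ) := by
  have hh := (hgrid_pos hN).ne'
  unfold DhSymbol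
  rw [periodize_eq_self _ (gridPt_mem_Ioc hN hev hk), mul_assoc]
  congr 1
  have : gridPt N k * ρ (gridPt N k) / hgrid N = k * ρ (gridPt N k) := by
    conv_lhs => rw [show gridPt N k * ρ (gridPt N k) = k * hgrid N * ρ (gridPt N k) from rfl]
    field_simp
  rw [this]
  push_cast
  rfl

theorem DhSymbol_add_period {N : ℤ} (hN : 0 < N) (ρ : ℝ → ℝ) (k : ℤ) :
    DhSymbol N ρ (k + N) = DhSymbol N ρ k := by
  unfold DhSymbol
  have : gridPt N (k + N) = gridPt N k + 2 * Real.pi := by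
    rw [← intCast_mul_hgrid hN]
    unfold gridPt
    push_cast
    ring
  rw [this, periodize_periodic]

theorem Dh_eq_idft_DhSymbol {N : ℤ} (hN : 0 < N) (hev : Even N) (ρ : ℝ → ℝ) (w : ℤ → ℂ) (i : ℤ) :
    Dh N ρ w i = idft N (fun k => DhSymbol N ρ k * dft N w k) i := by
  simp only [Dh, idft_eq_sum_mode]
  exact Finset.sum_congr rfl fun k hk => by rw [DhSymbol_eq hN hev ρ hk]

theorem Dh_mode_mul {N : ℤ} (hN : 0 < N) (hev : Even N) (ρ : ℝ → ℝ) (m : ℤ) (w : ℤ → ℂ) (i : ℤ) :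
    Dh N ρ (fun j => mode N m j * w j) i =
      mode N m i * idft N (fun k => DhSymbol N ρ (k + m) * dft N w k) i := by
  rw [Dh_eq_idft_DhSymbol hN hev]
  simp only [dft_mode_mul, idft_eq_sum_mode]
  rw [← sum_idxs_add hN hev (m := m), Finset.mul_sum]
  · refine Finset.sum_congr rfl fun k _ => ?_
    rw [add_sub_cancel_right, mode_add_left]
    ring
  · intro k
    rw [DhSymbol_add_period hN, mode_add_left, mode_period hN, mul_one, add_sub_right_comm,
      dft_add_period hN]

theorem hasSum_DhProdRem {N : ℤ} (hN : 0 < N) (hev : Even N) (ρ : ℝ → ℝ) {f : ℝ → ℂ}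
    {c : ℤ → ℂ} (hf : ∀ j, HasSum (fun m => c m * mode N m j) (f (gridPt N j)))
    (hf' : ∀ j, HasSum (fun m => Complex.I * m * c m * mode N m j) (deriv f (gridPt N j)))
    (w : ℤ → ℂ) (i : ℤ) :
    HasSum (fun m => c m * (mode N m i * idft N (fun k =>
      (DhSymbol N ρ (k + m) - DhSymbol N ρ k - Complex.I * m * (qfilt ρ (gridPt N k) : ℂ)) *
        dft N w k) i)) (DhProdRem N ρ f w i) := by
  have h1 : HasSum (fun m => c m * (mode N m i *
      idft N (fun k => DhSymbol N ρ (k + m) * dft N w k) i))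
      (Dh N ρ (fun j => f (gridPt N j) * w j) i) := by
    have : HasSum (fun m => Dh N ρ (fun j => c m * (mode N m j * w j)) i)
        (Dh N ρ (fun j => f (gridPt N j) * w j) i) := by
      have hprod : ∀ j, HasSum (fun m => c m * (mode N m j * w j)) (f (gridPt N j) * w j) :=
        fun j => by simpa only [mul_assoc] using (hf j).mul_right (w j)
      exact hasSum_idft (fun k => (hasSum_dft hprod k).mul_left _) i
    convert this using 2 with m
    rw [← Dh_mode_mul hN hev]
    simp only [Dh, idft_eq_sum_mode, dft_const_mul, Finset.mul_sum]
    refine Finset.sum_congr rfl fun k _ => ?_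
    ring
  have h2 := (hf i).mul_right (Dh N ρ w i)
  have h3 := (hf' i).mul_left (wq N ρ w i)
  unfold DhProdRem
  convert (h1.sub h2).sub h3 using 2 with m
  · rfl
  rw [Dh_eq_idft_DhSymbol hN hev]
  simp only [wq, idft_eq_sum_mode, Finset.mul_sum, Finset.sum_mul, ← Finset.sum_sub_distrib]
  refine Finset.sum_congr rfl fun k _ => ?_
  ring

theorem IsFilter.exists_norm_DhSymbol_sub_le {ρ : ℝ → ℝ} (hρ : IsFilter ρ) :
    ∃ C : ℝ, 0 ≤ C ∧ ∀ N : ℤ, 0 < N → Even N → ∀ m : ℤ, ∀ k ∈ idxs N,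
      ‖DhSymbol N ρ (k + m) - DhSymbol N ρ k - Complex.I * m * (qfilt ρ (gridPt N k) : ℂ)‖ ≤
        C * hgrid N * (m : ℝ) ^ 2 := by
  obtain ⟨r, hr, hsm⟩ := hρ.smooth
  have hsm2 : ContDiff ℝ 2 ρ := hsm.of_le (by exact_mod_cast hr.le)
  have hder : ∀ x, deriv (fun y => y * ρ y) x = ρ x + x * deriv ρ x := fun x => by
    have := (hasDerivAt_id x).mul (hsm2.differentiable two_ne_zero x).hasDerivAt
    exact this.deriv.trans (by simp)
  obtain ⟨C, hC0, hC⟩ := exists_periodize_taylor_bound (contDiff_id.mul hsm2)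
    (by simp [hρ.zero_at_pi]) (by simp [hρ.zero_at_neg_pi])
    ((hder _).trans (by simp [hρ.zero_at_pi, hρ.deriv_zero_at_pi]))
    ((hder _).trans (by simp [hρ.zero_at_neg_pi, hρ.deriv_zero_at_neg_pi]))
  refine ⟨C, hC0, fun N hN hev m k hk => ?_⟩
  have hh := hgrid_pos hN
  have h := hC _ (gridPt_mem_Ioc hN hev hk) (m * hgrid N)
  have hadd : gridPt N k + m * hgrid N = gridPt N (k + m) := by
    unfold gridPt
    push_cast
    ring
  rw [hadd] at h
  have heq : DhSymbol N ρ (k + m) - DhSymbol N ρ k - Complex.I * m * (qfilt ρ (gridPt N k) : ℂ) =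
      Complex.I * (((periodize (fun x => x * ρ x) (gridPt N (k + m)) -
        periodize (fun x => x * ρ x) (gridPt N k) -
        m * hgrid N * qfilt ρ (gridPt N k)) / hgrid N : ℝ) : ℂ) := by
    have : (hgrid N : ℂ) ≠ 0 := by exact_mod_cast hh.ne'
    unfold DhSymbol
    push_cast
    field_simp
  rw [heq, norm_mul, Complex.norm_I, one_mul, Complex.norm_real, Real.norm_eq_abs, abs_div,
    abs_of_pos hh, div_le_iff₀ hh]
  calc _ ≤ C * (m * hgrid N) ^ 2 := h
    _ = _ := by ring

theorem exists_l2norm_DhProdRem_le {f : ℝ → ℂ} (hper : Function.Periodic f (2 * Real.pi))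
    (hf : ContDiff ℝ 3 f) {ρ : ℝ → ℝ} (hρ : IsFilter ρ) :
    ∃ C : ℝ, 0 ≤ C ∧ ∀ N : ℤ, 0 < N → Even N → ∀ w : ℤ → ℂ,
      l2norm N (DhProdRem N ρ f w) ≤ C * hgrid N * l2norm N w := by
  obtain ⟨C, hC0, hC⟩ := hρ.exists_norm_DhSymbol_sub_le
  set c := fourierCoeffOn Real.two_pi_pos f
  have hsum : ∀ p ≤ 2, Summable fun n : ℤ => |(n : ℝ)| ^ p * ‖c n‖ := fun p hp =>
    hper.summable_abs_pow_mul_fourierCoeffOn hf hp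
  have hser := hper.hasSum_fourierCoeffOn_mul_exp hf.continuous (by simpa using hsum 0 (by simp))
  have hderc := hper.fourierCoeffOn_deriv (hf.of_le (by norm_num))
  have hser' := hper.deriv.hasSum_fourierCoeffOn_mul_exp (hf.continuous_deriv (by norm_num))
    (by simpa [hderc] using hsum 1 (by simp))
  simp only [hderc] at hser'
  have hsq : Summable fun m : ℤ => (m : ℝ) ^ 2 * ‖c m‖ := by simpa using hsum 2 le_rfl
  refine ⟨C * ∑' m : ℤ, (m : ℝ) ^ 2 * ‖c m‖,
    mul_nonneg hC0 (tsum_nonneg fun m => by positivity), fun N hN hev w => ?_⟩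
  have hh := hgrid_pos hN
  refine l2norm_le_of_hasSum hN
    (B := fun m : ℤ => (C * hgrid N * l2norm N w) * ((m : ℝ) ^ 2 * ‖c m‖))
    (hasSum_DhProdRem hN hev ρ (fun j => hser _) (fun j => hser' _) w) (fun m => ?_) ?_
  · rw [l2norm_const_mul, l2norm_mode_mul]
    have := l2norm_idft_mul_dft_le hN hev (by positivity) (hC N hN hev m) w
    calc _ ≤ ‖c m‖ * (C * hgrid N * (m : ℝ) ^ 2 * l2norm N w) := by gcongr
      _ = _ := by ring
  · rw [show C * (∑' m : ℤ, (m : ℝ) ^ 2 * ‖c m‖) * hgrid N * l2norm N w =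
      C * hgrid N * l2norm N w * ∑' m : ℤ, (m : ℝ) ^ 2 * ‖c m‖ by ring]
    exact hsq.hasSum.mul_left _

theorem abs_le_pi_div_hgrid {N k : ℤ} (hN : 0 < N) (hev : Even N) (hk : k ∈ idxs N) :
    |(k : ℝ)| ≤ Real.pi / hgrid N := by
  have hh := hgrid_pos hN
  have h := gridPt_mem_Ioc hN hev hk
  rw [le_div_iff₀ hh, ← abs_of_pos hh, ← abs_mul, abs_le]
  exact ⟨h.1.le, h.2⟩

theorem l2norm_Sh_le {N : ℤ} (hN : 0 < N) (hev : Even N) (w : ℤ → ℂ) :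
    l2norm N (Sh N w) ≤ Real.pi / hgrid N * l2norm N w := by
  have hh := hgrid_pos hN
  have hpi := Real.pi_pos
  have h := l2norm_idft_mul_dft_le hN hev (a := fun k => if k = N / 2 then 0 else Complex.I * k)
    (B := Real.pi / hgrid N) (by positivity) (fun k hk => ?_) w
  · simpa only [Sh, ite_mul, zero_mul] using h
  · split_ifs
    · simp only [norm_zero]
      positivity
    · simpa using abs_le_pi_div_hgrid hN hev hk

theorem IsFilter.exists_l2norm_Dh_le {ρ : ℝ → ℝ} (hρ : IsFilter ρ) :
    ∃ C : ℝ, 0 ≤ C ∧ ∀ N : ℤ, 0 < N → Even N → ∀ w : ℤ → ℂ,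
      l2norm N (Dh N ρ w) ≤ C / hgrid N * l2norm N w := by
  obtain ⟨r, hr, hsm⟩ := hρ.smooth
  obtain ⟨R, hR⟩ := isCompact_Icc.exists_bound_of_continuousOn
    (s := Set.Icc (-Real.pi) Real.pi) hsm.continuous.continuousOn
  have hpi := Real.pi_pos
  refine ⟨Real.pi * |R|, by positivity, fun N hN hev w => ?_⟩
  have hh := hgrid_pos hN
  refine l2norm_idft_mul_dft_le hN hev (by positivity) (fun k hk => ?_) w
  rw [norm_mul, norm_mul, Complex.norm_I, one_mul, Complex.norm_intCast, Complex.norm_real,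
    mul_div_right_comm]
  gcongr
  · exact abs_le_pi_div_hgrid hN hev hk
  · exact (hR _ (Set.Ioc_subset_Icc_self (gridPt_mem_Ioc hN hev hk))).trans (le_abs_self R)

/-- Lemma 8.6: discrete product rule for the filtered derivative
`D_h`, with remainder a first-order smoothing operator `A_{-1}`. -/
theorem Dh_product_rule (f : ℝ → ℂ)
    (hper : Function.Periodic f (2 * Real.pi)) (hf : ContDiff ℝ 3 f)
    (ρ : ℝ → ℝ) (hρ : IsFilter ρ) :
    ∃ c : ℝ, 0 < c ∧ ∀ N : ℤ, 2 ≤ N → Even N → ∀ w : ℤ → ℂ, ∀ k : ℕ, k ≤ 1 →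
      l2norm N ((Dh N ρ)^[k] (DhProdRem N ρ f w)) ≤ c * l2norm N w ∧
      l2norm N (DhProdRem N ρ f ((Sh N)^[k] w)) ≤ c * l2norm N w := by
  obtain ⟨C, hC0, hC⟩ := exists_l2norm_DhProdRem_le hper hf hρ
  obtain ⟨D, hD0, hD⟩ := hρ.exists_l2norm_Dh_le
  have hpi := Real.pi_pos
  refine ⟨C * (2 * Real.pi) + C * D + C * Real.pi + 1, by positivity, fun N hN2 hev w k hk => ?_⟩
  have hN : 0 < N := by omega
  have hh := hgrid_pos hN
  have hw : 0 ≤ l2norm N w := Real.sqrt_nonneg _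
  have hh2 : hgrid N ≤ 2 * Real.pi := by
    have h1 : (1 : ℝ) ≤ N := by exact_mod_cast hN
    have h2 := intCast_mul_hgrid hN
    nlinarith
  have hbase : l2norm N (DhProdRem N ρ f w) ≤
      (C * (2 * Real.pi) + C * D + C * Real.pi + 1) * l2norm N w := by
    refine (hC N hN hev w).trans ?_
    gcongr
    nlinarith [mul_le_mul_of_nonneg_left hh2 hC0, mul_nonneg hC0 hD0, mul_nonneg hC0 hpi.le]
  obtain rfl | rfl : k = 0 ∨ k = 1 := by omega
  · exact ⟨hbase, hbase⟩
  · simp only [Function.iterate_one]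
    constructor
    · calc l2norm N (Dh N ρ (DhProdRem N ρ f w))
          ≤ D / hgrid N * (C * hgrid N * l2norm N w) := by
            refine (hD N hN hev _).trans ?_
            gcongr
            exact hC N hN hev w
        _ = C * D * l2norm N w := by field_simp
        _ ≤ _ := by
            gcongr
            nlinarith [mul_nonneg hC0 hpi.le]
    · calc l2norm N (DhProdRem N ρ f (Sh N w))
          ≤ C * hgrid N * (Real.pi / hgrid N * l2norm N w) := by
            refine (hC N hN hev _).trans ?_
            gcongr
            exact l2norm_Sh_le hN hev w
        _ = C * Real.pi * l2norm N w := by field_simp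
        _ ≤ _ := by
            gcongr
            nlinarith [mul_nonneg hC0 hpi.le, mul_nonneg hC0 hD0]

end
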